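/- Let K be a field, S = K[x_1,…,x_n] the polynomial ring, and let I ⊆ S be a monomial ideal having a d-linear resolution. Let 𝔪 = (x_1,…,x_n) be the graded maximal ideal and let 𝔪^{[i]} = (x_F : F ⊆ [n], |F| = i) denote its i-th squarefree power. Then for every i ∈ [n] one has the equality of monomial ideals HS_i(I) + HS_{i-1}(𝔪I) = 𝔪^{[i]} I. -/

import Mathlib

/-!
Everything is read off the multigraded Koszul complex. If `I` has a `d`-linear resolution, then
`I` is generated in degree `d`, and in total degree `i + d` the Koszul chains `K_i(I)` receive
no boundaries, so `Tor_i(K, I)_a = ker (K_i(I)_a → K_{i-1}(I)_a)`. In the same total degree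
`K_{i-1}(𝔪I)_a = K_{i-1}(I)_a` also receives no boundaries from `K_i(𝔪I)_a = 0`, so
`Tor_{i-1}(K, 𝔪I)_a` is the module of `(i-1)`-cycles of `I`. A set `F` of size `i` with
`x^(a - F) ∈ I` is therefore either a cycle, giving `x^a ∈ HS_i(I)`, or has nonzero boundary,
giving `x^a ∈ HS_{i-1}(𝔪I)` (`monomial_mem_HS_add`).

Conversely, a nonzero class of `Tor_i(K, I)_a` involves some such `F` (`HSIdeal_le`), and a
nonzero `(i-1)`-cycle of `𝔪I` lies off the linear strand of `I`, hence is the boundary of a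
nonzero `i`-chain of `I` (`HSIdeal_maxIdl_mul_le`).

To compare the complexes of `I` and `𝔪I`, both are embedded in the free module on all subsets of
`[n]` with its simplicial boundary `fullD`; `nontrivial_Hmod_iff` expresses nonvanishing of
`Tor` there.
-/


open MvPolynomial

namespace Paper

noncomputable section

variable (K : Type) [Field K] (n : ℕ)

/-- The polynomial ring `S = K[x_1, …, x_n]`. -/
abbrev S := MvPolynomial (Fin n) K

variable {n}

/-- The squarefree exponent vector of a subset `F ⊆ [n]`. -/
def expF (F : Finset (Fin n)) : Fin n →₀ ℕ := ∑ j ∈ F, Finsupp.single j 1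

variable {K}

/-- Basis of the multidegree-`a` component of the `i`-th term of the Koszul
complex of `x_1, …, x_n` tensored with the ideal `I`:  subsets `F` of
cardinality `i` such that `x^(a - ε_F) ∈ I`. -/
abbrev KB (I : Ideal (S K n)) (a : Fin n →₀ ℕ) (i : ℕ) : Type :=
  {F : Finset (Fin n) // F.card = i ∧ expF F ≤ a ∧
    (monomial (a - expF F) (1 : K) : S K n) ∈ I}

/-- The Koszul differential (in multidegree `a`) from homological degree
`i+1` to `i`. -/
def kd (I : Ideal (S K n)) (a : Fin n →₀ ℕ) (i : ℕ) :
    (KB I a (i + 1) →₀ K) →ₗ[K] (KB I a i →₀ K) :=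
  Finsupp.lsum K fun F =>
    LinearMap.toSpanSingleton K _
      (∑ j ∈ F.1.attach,
        ((-1 : K) ^ ((F.1.filter (fun x => x < j.1)).card)) •
          Finsupp.single
            (⟨F.1.erase j.1, by
              obtain ⟨hcard, hle, hmem⟩ := F.2
              have hj : j.1 ∈ F.1 := j.2
              have herase : expF (F.1.erase j.1) + Finsupp.single j.1 1 = expF F.1 := by
                simpa [expF] using Finset.sum_erase_add F.1 (fun k => Finsupp.single k (1:ℕ)) hj
              refine ⟨by simp [Finset.card_erase_of_mem hj, hcard], ?_, ?_⟩
              · refine le_trans ?_ hle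
                rw [← herase]; exact le_add_of_nonneg_right bot_le
              · have h1 : Finsupp.single j.1 1 ≤ expF F.1 := by
                  rw [← herase]; exact le_add_of_nonneg_left bot_le
                have key : a - expF (F.1.erase j.1) =
                    (a - expF F.1) + Finsupp.single j.1 1 := by
                  have : expF (F.1.erase j.1) = expF F.1 - Finsupp.single j.1 1 := by
                    rw [← herase]; simp
                  rw [this, tsub_tsub_assoc hle h1]
                rw [key]
                have : (monomial ((a - expF F.1) + Finsupp.single j.1 1) (1:K) : S K n)
                    = (monomial (a - expF F.1) (1:K)) * (monomial (Finsupp.single j.1 1) (1:K)) := by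
                  rw [monomial_mul, mul_one]
                rw [this]
                exact Ideal.mul_mem_right _ _ hmem⟩ : KB I a i) (1 : K))

/-- The outgoing Koszul differential from homological degree `i`
(the zero map when `i = 0`). -/
def kdOut (I : Ideal (S K n)) (a : Fin n →₀ ℕ) :
    (i : ℕ) → (KB I a i →₀ K) →ₗ[K] (KB I a (i - 1) →₀ K)
  | 0 => 0
  | (i + 1) => kd I a i

/-- The multidegree-`a` component of `Tor_i^S(K, I)`, computed as the `i`-th
homology of the multidegree-`a` strand of the Koszul complex tensored
with `I`. -/
abbrev Hmod (I : Ideal (S K n)) (a : Fin n →₀ ℕ) (i : ℕ) :=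
  ↥(Submodule.map (Submodule.mkQ (LinearMap.range (kd I a i)))
      (LinearMap.ker (kdOut I a i)))

/-- The `i`-th homological shift ideal `HS_i(I)`, generated by the monomials
`x^a` with `Tor_i^S(K, I)_a ≠ 0`. -/
def HSIdeal (i : ℕ) (I : Ideal (S K n)) : Ideal (S K n) :=
  Ideal.span {p | ∃ a : Fin n →₀ ℕ, Nontrivial (Hmod I a i) ∧ p = monomial a 1}

/-- `I` is a monomial ideal. -/
def IsMonomialIdeal (I : Ideal (S K n)) : Prop :=
  ∃ A : Set (Fin n →₀ ℕ), I = Ideal.span ((fun a => (monomial a 1 : S K n)) '' A)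

/-- `I` has a `d`-linear resolution: `Tor_i^S(K,I)_j = 0` whenever `j ≠ i + d`. -/
def LinearRes (d : ℕ) (I : Ideal (S K n)) : Prop :=
  ∀ (i : ℕ) (a : Fin n →₀ ℕ), (a.sum fun _ e => e) ≠ i + d → Subsingleton (Hmod I a i)

/-- The projective dimension of (a finitely generated multigraded module such
as) `I` over `S`: the largest `i` with `Tor_i^S(K, I) ≠ 0`. -/
def pdim (I : Ideal (S K n)) : ℕ :=
  sSup {i | ∃ a, Nontrivial (Hmod I a i)}

variable (K n)

/-- The graded maximal ideal `𝔪 = (x_1, …, x_n)`. -/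
def maxIdl : Ideal (S K n) := Ideal.span (Set.range X)

/-- The `i`-th squarefree power `𝔪^{[i]} = (x_F : F ⊆ [n], |F| = i)`. -/
def sqPow (i : ℕ) : Ideal (S K n) :=
  Ideal.span {p | ∃ F : Finset (Fin n), F.card = i ∧ p = monomial (expF F) 1}

/-- The exponent vector of `α = x_1⋯x_n`. -/
def aexp : Fin n →₀ ℕ := expF (Finset.univ : Finset (Fin n))

/-- The edge ideal `I(G)` of a graph `G` on `[n]`. -/
def edgeIdeal (G : SimpleGraph (Fin n)) : Ideal (S K n) :=
  Ideal.span {p | ∃ i j, G.Adj i j ∧ p = X i * X j}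

/-- The complementary edge ideal `I_c(G)` of a graph `G` on `[n]`. -/
def compIdeal (G : SimpleGraph (Fin n)) : Ideal (S K n) :=
  Ideal.span {p | ∃ i j, G.Adj i j ∧
    p = monomial (aexp n - Finsupp.single i 1 - Finsupp.single j 1) 1}


variable {K} {n}

end

noncomputable section

/-- The full simplex boundary map (Koszul signs) on the free module on all subsets of `[n]`. -/
def fullD (K : Type) [Field K] (n : ℕ) :
    (Finset (Fin n) →₀ K) →ₗ[K] (Finset (Fin n) →₀ K) :=
  Finsupp.lsum K fun F =>
    LinearMap.toSpanSingleton K _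
      (∑ j ∈ F, ((-1 : K) ^ ((F.filter (fun x => x < j)).card)) •
        Finsupp.single (F.erase j) (1 : K))

/-- The chains of the multidegree-`a` Koszul strand of `I` in homological degree `i`, realised
inside the free module on all subsets of `[n]`. -/
def chains {K : Type} [Field K] {n : ℕ} (I : Ideal (S K n)) (a : Fin n →₀ ℕ) (i : ℕ) :
    Submodule K (Finset (Fin n) →₀ K) :=
  Finsupp.supported K K {F | F.card = i ∧ expF F ≤ a ∧
    (monomial (a - expF F) (1 : K) : S K n) ∈ I}

/-- The inclusion of the Koszul strand of `I` into the free module on all subsets of `[n]`. -/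
def incl {K : Type} [Field K] {n : ℕ} (I : Ideal (S K n)) (a : Fin n →₀ ℕ) (i : ℕ) :
    (KB I a i →₀ K) →ₗ[K] (Finset (Fin n) →₀ K) :=
  Finsupp.lmapDomain K K Subtype.val

end

section

variable {K : Type} [Field K] {n : ℕ}

/-! ### The simplicial boundary and the embedded Koszul complex -/

lemma fullD_single (F : Finset (Fin n)) :
    fullD K n (Finsupp.single F 1) =
      ∑ j ∈ F, ((-1 : K) ^ ((F.filter (fun x => x < j)).card)) •
        Finsupp.single (F.erase j) (1 : K) := by
  simp [fullD]

lemma incl_injective (I : Ideal (S K n)) (a : Fin n →₀ ℕ) (i : ℕ) :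
    Function.Injective (incl I a i) :=
  Finsupp.mapDomain_injective Subtype.val_injective

lemma range_incl (I : Ideal (S K n)) (a : Fin n →₀ ℕ) (i : ℕ) :
    LinearMap.range (incl I a i) = chains I a i := by
  unfold incl chains
  rw [Finsupp.range_lmapDomain, Finsupp.supported_eq_span_single]
  congr 1
  ext x
  simp [and_assoc]

lemma incl_kd (I : Ideal (S K n)) (a : Fin n →₀ ℕ) (i : ℕ) (z : KB I a (i + 1) →₀ K) :
    incl I a i (kd I a i z) = fullD K n (incl I a (i + 1) z) := by
  suffices h : (incl I a i) ∘ₗ (kd I a i) = (fullD K n) ∘ₗ (incl I a (i + 1)) from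
    LinearMap.congr_fun h z
  ext1 F
  ext1
  simp only [LinearMap.comp_apply, Finsupp.lsingle_apply]
  have h1 : incl I a (i + 1) (Finsupp.single F 1) = Finsupp.single F.1 1 := by
    simp [incl]
  rw [h1, fullD_single, ← Finset.sum_attach]
  simp [kd, incl, Finsupp.mapDomain_single]

/-- Koszul sign rule: deleting two elements of `F` in either order gives opposite signs. -/
lemma sign_swap (F : Finset (Fin n)) {j k : Fin n} (hj : j ∈ F) (hjk : j < k) :
    (-1 : K) ^ ((F.filter (fun x => x < j)).card) *
        (-1 : K) ^ (((F.erase j).filter (fun x => x < k)).card) +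
      (-1 : K) ^ ((F.filter (fun x => x < k)).card) *
        (-1 : K) ^ (((F.erase k).filter (fun x => x < j)).card) = 0 := by
  have h1 : (F.erase k).filter (fun x => x < j) = F.filter (fun x => x < j) := by
    ext x
    simp only [Finset.mem_filter, Finset.mem_erase]
    constructor
    · tauto
    · rintro ⟨h, h'⟩
      exact ⟨⟨(h'.trans hjk).ne, h⟩, h'⟩
  have h2 : (F.filter (fun x => x < k)).card = ((F.erase j).filter (fun x => x < k)).card + 1 := by
    rw [Finset.filter_erase, Finset.card_erase_add_one]
    simp [hj, hjk]
  rw [h1, h2]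
  ring

lemma fullD_fullD (z : Finset (Fin n) →₀ K) : fullD K n (fullD K n z) = 0 := by
  suffices h : fullD K n ∘ₗ fullD K n = 0 from LinearMap.congr_fun h z
  ext1 F
  ext1
  simp only [LinearMap.comp_apply, Finsupp.lsingle_apply, LinearMap.zero_apply]
  rw [fullD_single]
  simp only [map_sum, map_smul, fullD_single, Finset.smul_sum, smul_smul]
  rw [Finset.sum_sigma']
  refine Finset.sum_involution (fun p _ => ⟨p.2, p.1⟩) ?_ ?_ ?_ ?_
  · rintro ⟨j, k⟩ hp
    simp only [Finset.mem_sigma, Finset.mem_erase] at hp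
    obtain ⟨hj, hkj, hk⟩ := hp
    simp only
    rw [Finset.erase_right_comm (a := k), ← add_smul]
    rcases lt_or_gt_of_ne hkj with h | h
    · rw [add_comm, sign_swap F hk h, zero_smul]
    · rw [sign_swap F hj h, zero_smul]
  · rintro ⟨j, k⟩ hp _ h
    simp only [Finset.mem_sigma, Finset.mem_erase] at hp
    simp only [Sigma.mk.injEq] at h
    exact hp.2.1 h.1
  · rintro ⟨j, k⟩ hp
    simp only [Finset.mem_sigma, Finset.mem_erase] at hp ⊢
    exact ⟨hp.2.2, hp.2.1.symm, hp.1⟩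
  · rintro ⟨j, k⟩ _
    rfl

lemma kdOut_eq_zero_iff (I : Ideal (S K n)) (a : Fin n →₀ ℕ) (i : ℕ) (z : KB I a i →₀ K) :
    kdOut I a i z = 0 ↔ fullD K n (incl I a i z) = 0 := by
  cases i with
  | zero =>
    simp only [kdOut, LinearMap.zero_apply, true_iff]
    -- in homological degree `0` the only basis element is the empty set
    suffices h : fullD K n ∘ₗ incl I a 0 = 0 from LinearMap.congr_fun h z
    ext1 F
    ext1
    have h1 : incl I a 0 (Finsupp.single F 1) = Finsupp.single ∅ 1 := by
      rw [← Finset.card_eq_zero.mp F.2.1]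
      simp [incl]
    simp only [LinearMap.comp_apply, Finsupp.lsingle_apply, h1, fullD_single]
    simp
  | succ i =>
    rw [← incl_kd]
    exact (map_eq_zero_iff _ (incl_injective I a i)).symm

lemma nontrivial_Hmod_iff (I : Ideal (S K n)) (a : Fin n →₀ ℕ) (i : ℕ) :
    Nontrivial (Hmod I a i) ↔
      ∃ c ∈ chains I a i, fullD K n c = 0 ∧ ∀ w ∈ chains I a (i + 1), fullD K n w ≠ c := by
  rw [Submodule.nontrivial_iff_ne_bot, Submodule.ne_bot_iff]
  constructor
  · rintro ⟨_, ⟨z, hz, rfl⟩, hne⟩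
    refine ⟨incl I a i z, ?_, (kdOut_eq_zero_iff I a i z).mp hz, ?_⟩
    · rw [← range_incl]; exact ⟨z, rfl⟩
    · rw [← range_incl]
      rintro _ ⟨w, rfl⟩ h
      rw [← incl_kd] at h
      apply hne
      rw [Submodule.mkQ_apply, Submodule.Quotient.mk_eq_zero]
      exact ⟨w, incl_injective I a i h⟩
  · rintro ⟨c, hc, hD, hw⟩
    rw [← range_incl] at hc
    obtain ⟨z, rfl⟩ := hc
    refine ⟨_, ⟨z, (kdOut_eq_zero_iff I a i z).mpr hD, rfl⟩, ?_⟩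
    rw [Submodule.mkQ_apply, Ne, Submodule.Quotient.mk_eq_zero]
    rintro ⟨w, rfl⟩
    refine hw (incl I a (i + 1) w) ?_ (incl_kd I a i w).symm
    rw [← range_incl]; exact ⟨w, rfl⟩

lemma chains_mono {I J : Ideal (S K n)} (h : I ≤ J) (a : Fin n →₀ ℕ) (i : ℕ) :
    chains I a i ≤ chains J a i :=
  Finsupp.supported_mono fun _ hF => ⟨hF.1, hF.2.1, h hF.2.2⟩

lemma exists_of_mem_chains {I : Ideal (S K n)} {a : Fin n →₀ ℕ} {i : ℕ}
    {c : Finset (Fin n) →₀ K} (hc : c ∈ chains I a i) (h0 : c ≠ 0) :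
    ∃ F : Finset (Fin n), F.card = i ∧ expF F ≤ a ∧
      (monomial (a - expF F) (1 : K) : S K n) ∈ I := by
  obtain ⟨F, hF⟩ := Finsupp.support_nonempty_iff.mpr h0
  exact ⟨F, (Finsupp.mem_supported K c).mp hc hF⟩

/-! ### Degrees and generators of an ideal with linear resolution -/

lemma degree_expF (F : Finset (Fin n)) : (expF F).degree = F.card := by
  simp [expF]

lemma degree_sub_expF {F : Finset (Fin n)} {a : Fin n →₀ ℕ} (h : expF F ≤ a) :
    (a - expF F).degree + F.card = a.degree := by
  conv_rhs => rw [← tsub_add_cancel_of_le h]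
  rw [map_add, degree_expF]

lemma LinearRes.degree_eq {d : ℕ} {I : Ideal (S K n)} (hlin : LinearRes d I) {i : ℕ}
    {a : Fin n →₀ ℕ} (h : Nontrivial (Hmod I a i)) : a.degree = i + d := by
  by_contra hne
  have := hlin i a hne
  exact not_subsingleton _ this

/-- An ideal with a `d`-linear resolution is generated in degree `d`, at the level of monomials:
vanishing of `Tor_0` in every other degree lets one descend to a divisor of degree `d`. -/
lemma LinearRes.exists_le {d : ℕ} {I : Ideal (S K n)} (hlin : LinearRes d I) :
    ∀ (m : ℕ) (a : Fin n →₀ ℕ), a.degree = m → (monomial a (1 : K) : S K n) ∈ I →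
      ∃ u ≤ a, u.degree = d ∧ (monomial u (1 : K) : S K n) ∈ I := by
  intro m
  induction m using Nat.strong_induction_on with
  | _ m ih =>
    intro a ha hmem
    by_cases hd : a.degree = d
    · exact ⟨a, le_rfl, hd, hmem⟩
    have hnt : ¬ Nontrivial (Hmod I a 0) := fun h => hd (by simpa using hlin.degree_eq h)
    rw [nontrivial_Hmod_iff] at hnt
    push Not at hnt
    obtain ⟨w, hw, hDw⟩ := hnt (Finsupp.single ∅ 1)
      (Finsupp.single_mem_supported K 1 ⟨rfl, by simp [expF], by simpa [expF] using hmem⟩)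
      (by simp [fullD_single])
    have hw0 : w ≠ 0 := by
      rintro rfl
      rw [map_zero] at hDw
      exact (Finsupp.single_ne_zero.mpr one_ne_zero) hDw.symm
    obtain ⟨F, hF, hFa, hFI⟩ := exists_of_mem_chains hw hw0
    have := degree_sub_expF hFa
    obtain ⟨u, hu, h⟩ := ih (a - expF F).degree (by omega) _ rfl hFI
    exact ⟨u, hu.trans tsub_le_self, h⟩

lemma LinearRes.le_degree {d : ℕ} {I : Ideal (S K n)} (hlin : LinearRes d I)
    {a : Fin n →₀ ℕ} (h : (monomial a (1 : K) : S K n) ∈ I) : d ≤ a.degree := by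
  obtain ⟨u, hu, rfl, -⟩ := hlin.exists_le _ a rfl h
  exact Finsupp.degree_mono hu

lemma monomial_mem_of_le {I : Ideal (S K n)} {a b : Fin n →₀ ℕ} (h : a ≤ b)
    (ha : (monomial a (1 : K) : S K n) ∈ I) : (monomial b (1 : K) : S K n) ∈ I := by
  rw [← tsub_add_cancel_of_le h, ← mul_one (1 : K), ← monomial_mul]
  exact Ideal.mul_mem_left _ _ ha

lemma LinearRes.lt_degree_of_mem_maxIdl_mul {d : ℕ} {I : Ideal (S K n)} (hlin : LinearRes d I)
    (hmono : IsMonomialIdeal I) {a : Fin n →₀ ℕ}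
    (h : (monomial a (1 : K) : S K n) ∈ maxIdl K n * I) : d < a.degree := by
  obtain ⟨A, hA⟩ := hmono
  have hle : maxIdl K n * I ≤ Ideal.span ((fun s => (monomial s (1 : K) : S K n)) ''
      {s | d < s.degree}) := by
    conv_lhs => rw [hA, maxIdl, Ideal.span_mul_span']
    rw [Ideal.span_le]
    rintro _ ⟨_, ⟨j, rfl⟩, _, ⟨u, hu, rfl⟩, rfl⟩
    refine Ideal.subset_span ⟨Finsupp.single j 1 + u, ?_, ?_⟩
    · have : d ≤ u.degree := hlin.le_degree (hA ▸ Ideal.subset_span ⟨u, hu, rfl⟩)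
      simp only [Set.mem_ofPred_eq, map_add, Finsupp.degree_single]
      omega
    · simp [X, monomial_mul]
  obtain ⟨s, hs, hsa⟩ := mem_ideal_span_monomial_image.mp (hle h) a (by simp [mem_support_iff])
  exact lt_of_lt_of_le hs (Finsupp.degree_mono hsa)

lemma LinearRes.mem_maxIdl_mul {d : ℕ} {I : Ideal (S K n)} (hlin : LinearRes d I)
    {a : Fin n →₀ ℕ} (h : (monomial a (1 : K) : S K n) ∈ I) (hd : d < a.degree) :
    (monomial a (1 : K) : S K n) ∈ maxIdl K n * I := by
  obtain ⟨u, hu, hud, huI⟩ := hlin.exists_le _ a rfl h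
  have hne : a - u ≠ 0 := by
    intro h0
    have : a = u := le_antisymm (tsub_eq_zero_iff_le.mp h0) hu
    subst this
    omega
  obtain ⟨j, hj⟩ := Finsupp.support_nonempty_iff.mpr hne
  have hmem : (monomial (a - u) (1 : K) : S K n) ∈ maxIdl K n := by
    refine monomial_mem_of_le (a := Finsupp.single j 1) ?_ (Ideal.subset_span ⟨j, rfl⟩)
    rw [Finsupp.single_le_iff]
    exact Nat.one_le_iff_ne_zero.mpr (Finsupp.mem_support_iff.mp hj)
  have := Ideal.mul_mem_mul hmem huI
  rwa [monomial_mul, mul_one, tsub_add_cancel_of_le hu] at this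

/-! ### The two inclusions -/

lemma monomial_mem_sqPow_mul {I : Ideal (S K n)} {a : Fin n →₀ ℕ} {F : Finset (Fin n)}
    (hF : expF F ≤ a) (h : (monomial (a - expF F) (1 : K) : S K n) ∈ I) :
    (monomial a (1 : K) : S K n) ∈ sqPow K n F.card * I := by
  have h1 : (monomial (expF F) (1 : K) : S K n) ∈ sqPow K n F.card :=
    Ideal.subset_span ⟨F, rfl, rfl⟩
  have := Ideal.mul_mem_mul h1 h
  rwa [monomial_mul, mul_one, add_tsub_cancel_of_le hF] at this

lemma HSIdeal_le (I : Ideal (S K n)) (i : ℕ) : HSIdeal i I ≤ sqPow K n i * I := by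
  rw [HSIdeal, Ideal.span_le]
  rintro _ ⟨a, ha, rfl⟩
  rw [nontrivial_Hmod_iff] at ha
  obtain ⟨c, hc, -, hw⟩ := ha
  have h0 : c ≠ 0 := by
    rintro rfl
    exact hw 0 (Submodule.zero_mem _) (map_zero _)
  obtain ⟨F, rfl, hF, hFI⟩ := exists_of_mem_chains hc h0
  exact monomial_mem_sqPow_mul hF hFI

/-- A nonzero Koszul cycle of `𝔪I` is a cycle of `I` outside the linear strand, hence a
boundary of a nonzero chain of `I` one homological degree higher. -/
lemma HSIdeal_maxIdl_mul_le {d : ℕ} {I : Ideal (S K n)} (hmono : IsMonomialIdeal I)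
    (hlin : LinearRes d I) (i : ℕ) :
    HSIdeal i (maxIdl K n * I) ≤ sqPow K n (i + 1) * I := by
  rw [HSIdeal, Ideal.span_le]
  rintro _ ⟨a, ha, rfl⟩
  rw [nontrivial_Hmod_iff] at ha
  obtain ⟨c, hc, hD, hw⟩ := ha
  have h0 : c ≠ 0 := by
    rintro rfl
    exact hw 0 (Submodule.zero_mem _) (map_zero _)
  have hcI : c ∈ chains I a i :=
    chains_mono (Ideal.mul_le_right (I := maxIdl K n) (J := I)) a i hc
  have hdeg : a.degree ≠ i + d := by
    obtain ⟨F, hFi, hF, hFI⟩ := exists_of_mem_chains hc h0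
    have h1 := hlin.lt_degree_of_mem_maxIdl_mul hmono hFI
    have h2 := degree_sub_expF hF
    omega
  have hnt : ¬ Nontrivial (Hmod I a i) := fun h => hdeg (hlin.degree_eq h)
  rw [nontrivial_Hmod_iff] at hnt
  push Not at hnt
  obtain ⟨w, hwI, hwc⟩ := hnt c hcI hD
  have hw0 : w ≠ 0 := by
    rintro rfl
    exact h0 (by rw [← hwc, map_zero])
  obtain ⟨F, hFi, hF, hFI⟩ := exists_of_mem_chains hwI hw0
  have := monomial_mem_sqPow_mul hF hFI
  rwa [hFi] at this

lemma incl_mem_chains (I : Ideal (S K n)) (a : Fin n →₀ ℕ) (i : ℕ) (z : KB I a i →₀ K) :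
    incl I a i z ∈ chains I a i := by
  rw [← range_incl]; exact ⟨z, rfl⟩

/-- In total degree `i + 1 + d` a basis chain `F` of `I` either is a cycle, giving a class in
`Tor_{i+1}(K, I)`, or has a nonzero boundary, giving a class in `Tor_i(K, 𝔪I)`. No boundaries
have to be divided out in either case, for degree reasons. -/
lemma monomial_mem_HS_add {d : ℕ} {I : Ideal (S K n)} (hmono : IsMonomialIdeal I)
    (hlin : LinearRes d I) (F : Finset (Fin n)) (i : ℕ) (hi : F.card = i + 1)
    (v : Fin n →₀ ℕ) (hv : v.degree = d) (hvI : (monomial v (1 : K) : S K n) ∈ I) :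
    (monomial (expF F + v) (1 : K) : S K n) ∈
      HSIdeal (i + 1) I + HSIdeal i (maxIdl K n * I) := by
  set a := expF F + v with ha
  have hdeg : a.degree = i + 1 + d := by rw [ha, map_add, degree_expF, hi, hv]
  let z : KB I a (i + 1) →₀ K :=
    Finsupp.single ⟨F, hi, le_add_of_nonneg_right bot_le, by simpa [ha] using hvI⟩ 1
  have hz : incl I a (i + 1) z = Finsupp.single F 1 := by simp [incl, z]
  have hzc := incl_mem_chains I a (i + 1) z
  by_cases hD : fullD K n (incl I a (i + 1) z) = 0
  · refine Ideal.mem_sup_left (Ideal.subset_span ⟨a, ?_, rfl⟩)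
    rw [nontrivial_Hmod_iff]
    refine ⟨_, hzc, hD, ?_⟩
    intro w hw h
    have hw0 : w ≠ 0 := by
      rintro rfl
      rw [map_zero, hz] at h
      exact (Finsupp.single_ne_zero.mpr one_ne_zero) h.symm
    obtain ⟨G, hG, hGa, hGI⟩ := exists_of_mem_chains hw hw0
    have h1 := hlin.le_degree hGI
    have h2 := degree_sub_expF hGa
    omega
  · refine Ideal.mem_sup_right (Ideal.subset_span ⟨a, ?_, rfl⟩)
    rw [nontrivial_Hmod_iff]
    refine ⟨fullD K n (incl I a (i + 1) z), ?_, fullD_fullD _, ?_⟩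
    · have hb : fullD K n (incl I a (i + 1) z) ∈ chains I a i := by
        rw [← incl_kd]; exact incl_mem_chains _ _ _ _
      refine Finsupp.supported_mono ?_ hb
      rintro G ⟨hG, hGa, hGI⟩
      have h2 := degree_sub_expF hGa
      exact ⟨hG, hGa, hlin.mem_maxIdl_mul hGI (by omega)⟩
    · intro w hw h
      have hw0 : w ≠ 0 := by
        rintro rfl
        exact hD (by rw [← h, map_zero])
      obtain ⟨G, hG, hGa, hGI⟩ := exists_of_mem_chains hw hw0
      have h1 := hlin.lt_degree_of_mem_maxIdl_mul hmono hGI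
      have h2 := degree_sub_expF hGa
      omega

end

/-- If `I ⊆ S = K[x_1, …, x_n]` is a monomial ideal with a
`d`-linear resolution then `HS_i(I) + HS_{i-1}(𝔪I) = 𝔪^{[i]} I` for every
`i ∈ [n]`. -/
theorem hs_add_hs_maxIdl_eq_sqPow_mul
    (K : Type) [Field K] (n d : ℕ) (I : Ideal (S K n))
    (hmono : IsMonomialIdeal I) (hlin : LinearRes d I) :
    ∀ i : ℕ, 1 ≤ i → i ≤ n →
      HSIdeal i I + HSIdeal (i - 1) (maxIdl K n * I) = sqPow K n i * I := by
  intro i hi _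
  obtain ⟨i, rfl⟩ := Nat.exists_eq_succ_of_ne_zero (Nat.one_le_iff_ne_zero.mp hi)
  simp only [Nat.succ_eq_add_one, Nat.add_sub_cancel]
  apply le_antisymm
  · exact sup_le (HSIdeal_le I (i + 1)) (HSIdeal_maxIdl_mul_le hmono hlin i)
  · have hmono' := hmono
    obtain ⟨A, hA⟩ := hmono'
    conv_lhs => rw [hA, sqPow, Ideal.span_mul_span']
    rw [Ideal.span_le]
    rintro _ ⟨_, ⟨F, hF, rfl⟩, _, ⟨u, hu, rfl⟩, rfl⟩
    have huI : (monomial u (1 : K) : S K n) ∈ I := hA ▸ Ideal.subset_span ⟨u, hu, rfl⟩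
    obtain ⟨v, hvu, hvd, hvI⟩ := hlin.exists_le _ u rfl huI
    simp only [monomial_mul, mul_one]
    exact monomial_mem_of_le (add_le_add_right hvu _)
      (monomial_mem_HS_add hmono hlin F i hF v hvd hvI)

end Paper
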